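/- Let M be a metric space, p ∈ [1,∞), and let (f_n)_{n∈ℕ} be a metric p-frame for M with bounds a, b. Let (g_n)_{n∈ℕ} be a sequence of Lipschitz functions g_n : M → 𝕂 and let α, β, γ ≥ 0 satisfy β < 1, α < 1 and γ < (1−α)·a, such that for all x, y ∈ M and every m ≥ 1, (∑_{n=1}^m |(f_n−g_n)(x) − (f_n−g_n)(y)|^p)^{1/p} ≤ α·(∑_{n=1}^m |f_n(x)−f_n(y)|^p)^{1/p} + β·(∑_{n=1}^m |g_n(x)−g_n(y)|^p)^{1/p} + γ·d(x,y). Then (g_n) is a metric p-frame for M with bounds ((1−α)a − γ)/(1+β) and ((1+α)b + γ)/(1−β). -/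

import Mathlib

/-!
Fix `x, y` and put `u i = f i x - f i y`, `v i = g i x - g i y`. On each finite index set the
hypothesis says that `N (u - v) ≤ α N u + β N v + c`, where `N` is a finite `ℓᵖ` seminorm and
`c = γ d(x, y)`, so the triangle inequality gives both `(1 - β) N v ≤ (1 + α) N u + c` and
`(1 - α) N u ≤ (1 + β) N v + c`. The first bounds the partial sums of `∑ ‖v i‖ ^ p`, which therefore
converge, and both inequalities then pass to the limit.
-/

open Filter Topology

section Seminorm

variable {G F : Type*} [AddGroup G] [FunLike F G ℝ] [AddGroupSeminormClass F G ℝ]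

theorem one_sub_mul_map_le_of_map_sub_le (N : F) {u v : G} {α β c : ℝ}
    (h : N (u - v) ≤ α * N u + β * N v + c) : (1 - α) * N u ≤ (1 + β) * N v + c := by
  have htri : N u ≤ N v + N (u - v) := le_map_add_map_sub N u v
  linarith

theorem one_sub_mul_map_right_le_of_map_sub_le (N : F) {u v : G} {α β c : ℝ}
    (h : N (u - v) ≤ α * N u + β * N v + c) : (1 - β) * N v ≤ (1 + α) * N u + c := by
  refine one_sub_mul_map_le_of_map_sub_le N ?_
  rwa [map_sub_rev, add_comm (β * N v)]

end Seminorm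

section FiniteLp

variable {ι κ : Type*} {E : ι → Type*} [∀ i, SeminormedAddCommGroup (E i)] {p : ℝ}

/-- The `ℓᵖ` seminorm of a family restricted to the finite index set `s`. It is a seminorm on the
whole product, so that seminorms for different `s` can be compared on the same family. -/
noncomputable def finsetLpSeminorm (hp : 1 ≤ p) (s : Finset ι) : AddGroupSeminorm (∀ i, E i) where
  toFun u := (∑ i ∈ s, ‖u i‖ ^ p) ^ (1 / p)
  map_zero' := by
    have hp0 : p ≠ 0 := by positivity
    simp [hp0]
  neg' u := by simp only [Pi.neg_apply, norm_neg]
  add_le' u v := calc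
    (∑ i ∈ s, ‖u i + v i‖ ^ p) ^ (1 / p) ≤ (∑ i ∈ s, (‖u i‖ + ‖v i‖) ^ p) ^ (1 / p) := by
      gcongr with i
      exact norm_add_le _ _
    _ ≤ (∑ i ∈ s, ‖u i‖ ^ p) ^ (1 / p) + (∑ i ∈ s, ‖v i‖ ^ p) ^ (1 / p) :=
      Real.Lp_add_le_of_nonneg s hp (fun _ _ => norm_nonneg _) (fun _ _ => norm_nonneg _)

theorem finsetLpSeminorm_apply (hp : 1 ≤ p) (s : Finset ι) (u : ∀ i, E i) :
    finsetLpSeminorm hp s u = (∑ i ∈ s, ‖u i‖ ^ p) ^ (1 / p) :=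
  rfl

theorem finsetLpSeminorm_le_iff (hp : 1 ≤ p) (s : Finset ι) (u : ∀ i, E i) {C : ℝ} (hC : 0 ≤ C) :
    finsetLpSeminorm hp s u ≤ C ↔ ∑ i ∈ s, ‖u i‖ ^ p ≤ C ^ p := by
  rw [finsetLpSeminorm_apply, one_div]
  exact Real.rpow_inv_le_iff_of_pos (by positivity) hC (by positivity)

theorem finsetLpSeminorm_le_tsum (hp : 1 ≤ p) (s : Finset ι) {u : ∀ i, E i}
    (hu : Summable fun i => ‖u i‖ ^ p) :
    finsetLpSeminorm hp s u ≤ (∑' i, ‖u i‖ ^ p) ^ (1 / p) := by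
  rw [finsetLpSeminorm_apply]
  gcongr
  exact hu.sum_le_tsum s fun i _ => by positivity

variable {l : Filter κ} {s : κ → Finset ι}

theorem tendsto_finsetLpSeminorm (hp : 1 ≤ p) (hs : Tendsto s l atTop) {u : ∀ i, E i}
    (hu : Summable fun i => ‖u i‖ ^ p) :
    Tendsto (fun k => finsetLpSeminorm hp (s k) u) l (𝓝 ((∑' i, ‖u i‖ ^ p) ^ (1 / p))) :=
  (Tendsto.comp hu.hasSum hs).rpow_const (.inr (by positivity))

variable [l.NeBot]

theorem summable_norm_rpow_of_finsetLpSeminorm_le (hp : 1 ≤ p) (hs : Tendsto s l atTop)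
    {u : ∀ i, E i} {C : ℝ} (hC : ∀ᶠ k in l, finsetLpSeminorm hp (s k) u ≤ C) :
    Summable fun i => ‖u i‖ ^ p := by
  refine summable_of_sum_le (c := C ^ p) (fun i => by positivity) fun t => ?_
  obtain ⟨k, hkC, htk⟩ := (hC.and (hs.eventually_ge_atTop t)).exists
  have hC0 : 0 ≤ C := (apply_nonneg _ u).trans hkC
  calc ∑ i ∈ t, ‖u i‖ ^ p
      ≤ ∑ i ∈ s k, ‖u i‖ ^ p :=
        Finset.sum_le_sum_of_subset_of_nonneg htk fun _ _ _ => by positivity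
    _ ≤ C ^ p := (finsetLpSeminorm_le_iff hp (s k) u hC0).1 hkC

theorem summable_norm_rpow_of_mul_finsetLpSeminorm_le (hp : 1 ≤ p) (hs : Tendsto s l atTop)
    {u v : ∀ i, E i} {A B c : ℝ} (hA : 0 < A) (hB : 0 ≤ B) (hv : Summable fun i => ‖v i‖ ^ p)
    (h : ∀ᶠ k in l, A * finsetLpSeminorm hp (s k) u ≤ B * finsetLpSeminorm hp (s k) v + c) :
    Summable fun i => ‖u i‖ ^ p := by
  refine summable_norm_rpow_of_finsetLpSeminorm_le hp hs
    (C := (B * (∑' i, ‖v i‖ ^ p) ^ (1 / p) + c) / A) ?_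
  filter_upwards [h] with k hk
  rw [le_div_iff₀' hA]
  refine hk.trans ?_
  gcongr
  exact finsetLpSeminorm_le_tsum hp (s k) hv

theorem mul_tsum_norm_rpow_le_of_mul_finsetLpSeminorm_le (hp : 1 ≤ p) (hs : Tendsto s l atTop)
    {u v : ∀ i, E i} {A B c : ℝ} (hu : Summable fun i => ‖u i‖ ^ p)
    (hv : Summable fun i => ‖v i‖ ^ p)
    (h : ∀ᶠ k in l, A * finsetLpSeminorm hp (s k) u ≤ B * finsetLpSeminorm hp (s k) v + c) :
    A * (∑' i, ‖u i‖ ^ p) ^ (1 / p) ≤ B * (∑' i, ‖v i‖ ^ p) ^ (1 / p) + c :=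
  le_of_tendsto_of_tendsto ((tendsto_finsetLpSeminorm hp hs hu).const_mul A)
    (((tendsto_finsetLpSeminorm hp hs hv).const_mul B).add_const c) h

end FiniteLp

section MetricPFrame

variable {ι κ M : Type*} {E : ι → Type*} [∀ i, SeminormedAddCommGroup (E i)] [PseudoMetricSpace M]

/-- A metric `p`-frame with bounds `a` and `b`: a family of maps whose increments have `ℓᵖ` norm
comparable to the distance. The members may take values in different seminormed groups. Lipschitz
continuity is not a field: for `p ≥ 1`, `upper` makes each member Lipschitz with constant `b`. -/
structure IsMetricPFrame (p : ℝ) (f : ∀ i, M → E i) (a b : ℝ) : Prop where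
  lower_pos : 0 < a
  upper_pos : 0 < b
  summable : ∀ x y, Summable fun i => ‖f i x - f i y‖ ^ p
  lower : ∀ x y, a * dist x y ≤ (∑' i, ‖f i x - f i y‖ ^ p) ^ (1 / p)
  upper : ∀ x y, (∑' i, ‖f i x - f i y‖ ^ p) ^ (1 / p) ≤ b * dist x y

theorem metric_pFrame_perturbation_general {p : ℝ} (hp : 1 ≤ p) {f g : ∀ i, M → E i}
    {a b α β γ : ℝ} (hf : IsMetricPFrame p f a b) (hα0 : 0 ≤ α) (hβ0 : 0 ≤ β) (hγ0 : 0 ≤ γ)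
    (hβ : β < 1) (hγ : γ < (1 - α) * a) {l : Filter κ} [l.NeBot] {s : κ → Finset ι}
    (hs : Tendsto s l atTop)
    (hper : ∀ x y, ∀ᶠ k in l,
      (∑ i ∈ s k, ‖(f i x - g i x) - (f i y - g i y)‖ ^ p) ^ (1 / p) ≤
        α * (∑ i ∈ s k, ‖f i x - f i y‖ ^ p) ^ (1 / p) +
        β * (∑ i ∈ s k, ‖g i x - g i y‖ ^ p) ^ (1 / p) + γ * dist x y) :
    IsMetricPFrame p g (((1 - α) * a - γ) / (1 + β)) (((1 + α) * b + γ) / (1 - β)) := by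
  have ha := hf.lower_pos
  have hb := hf.upper_pos
  have hα : 0 < 1 - α := pos_of_mul_pos_left (hγ0.trans_lt hγ) ha.le
  have hβ' : 0 < 1 - β := sub_pos.2 hβ
  have hincr : ∀ x y, ∀ᶠ k in l,
      finsetLpSeminorm hp (s k) ((fun i => f i x - f i y) - fun i => g i x - g i y) ≤
        α * finsetLpSeminorm hp (s k) (fun i => f i x - f i y) +
        β * finsetLpSeminorm hp (s k) (fun i => g i x - g i y) + γ * dist x y := by
    simpa only [finsetLpSeminorm_apply, Pi.sub_apply, sub_sub_sub_comm] using hper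
  have hg : ∀ x y, Summable fun i => ‖g i x - g i y‖ ^ p := fun x y =>
    summable_norm_rpow_of_mul_finsetLpSeminorm_le hp hs hβ' (by positivity) (hf.summable x y)
      ((hincr x y).mono fun _ => one_sub_mul_map_right_le_of_map_sub_le _)
  refine ⟨div_pos (sub_pos.2 hγ) (by positivity), by positivity, hg, fun x y => ?_, fun x y => ?_⟩
  · have hfg := mul_tsum_norm_rpow_le_of_mul_finsetLpSeminorm_le hp hs (hf.summable x y) (hg x y)
      ((hincr x y).mono fun _ => one_sub_mul_map_le_of_map_sub_le _)
    have hlower := mul_le_mul_of_nonneg_left (hf.lower x y) hα.le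
    rw [div_mul_eq_mul_div, div_le_iff₀ (by positivity)]
    linarith
  · have hgf := mul_tsum_norm_rpow_le_of_mul_finsetLpSeminorm_le hp hs (hg x y) (hf.summable x y)
      ((hincr x y).mono fun _ => one_sub_mul_map_right_le_of_map_sub_le _)
    have hupper := mul_le_mul_of_nonneg_left (hf.upper x y) (by positivity : 0 ≤ 1 + α)
    rw [div_mul_eq_mul_div, le_div_iff₀ hβ']
    linarith

end MetricPFrame

/-- Perturbation of metric p-frames: if `(f_n)` is a metric p-frame for `M` with bounds `a, b`
and `(g_n)` is a sequence of Lipschitz functions satisfying the stated perturbation inequality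
with parameters `α, β, γ ≥ 0`, `β < 1`, `α < 1`, `γ < (1-α)a`, then `(g_n)` is a metric p-frame
for `M` with bounds `((1-α)a - γ)/(1+β)` and `((1+α)b + γ)/(1-β)`. -/
theorem metric_pFrame_perturbation
    {𝕂 : Type*} [RCLike 𝕂] {M : Type*} [MetricSpace M]
    (p : ℝ) (hp : 1 ≤ p)
    (f g : ℕ → M → 𝕂) (a b : ℝ) (ha : 0 < a) (hb : 0 < b)
    (hflip : ∀ n, ∃ K, LipschitzWith K (f n))
    (hglip : ∀ n, ∃ K, LipschitzWith K (g n))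
    (hfsum : ∀ x y : M, Summable fun n => ‖f n x - f n y‖ ^ p)
    (hflow : ∀ x y : M, a * dist x y ≤ (∑' n, ‖f n x - f n y‖ ^ p) ^ (1 / p))
    (hfup : ∀ x y : M, (∑' n, ‖f n x - f n y‖ ^ p) ^ (1 / p) ≤ b * dist x y)
    (α β γ : ℝ) (hα0 : 0 ≤ α) (hβ0 : 0 ≤ β) (hγ0 : 0 ≤ γ)
    (hβ : β < 1) (hα : α < 1) (hγ : γ < (1 - α) * a)
    (hper : ∀ (x y : M) (m : ℕ), 1 ≤ m →
      (∑ n ∈ Finset.range m, ‖(f n x - g n x) - (f n y - g n y)‖ ^ p) ^ (1 / p) ≤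
        α * (∑ n ∈ Finset.range m, ‖f n x - f n y‖ ^ p) ^ (1 / p) +
        β * (∑ n ∈ Finset.range m, ‖g n x - g n y‖ ^ p) ^ (1 / p) + γ * dist x y) :
    (∀ x y : M, Summable fun n => ‖g n x - g n y‖ ^ p) ∧
    (∀ x y : M, ((1 - α) * a - γ) / (1 + β) * dist x y ≤
        (∑' n, ‖g n x - g n y‖ ^ p) ^ (1 / p)) ∧
    (∀ x y : M, (∑' n, ‖g n x - g n y‖ ^ p) ^ (1 / p) ≤
        ((1 + α) * b + γ) / (1 - β) * dist x y) := by
  have hg := metric_pFrame_perturbation_general hp ⟨ha, hb, hfsum, hflow, hfup⟩ hα0 hβ0 hγ0 hβ hγ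
    tendsto_finset_range fun x y => (eventually_ge_atTop 1).mono (hper x y)
  exact ⟨hg.summable, hg.lower, hg.upper⟩
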